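/- arXiv:1207.5206 — 3 statements merged into one kernel-verified Lean document; each statement's English description precedes it below -/
import Mathlib

section
/- Let C ∈ M_M(ℂ) be Hermitian, C̃ ∈ M_M(ℂ) be symmetric (C̃ᵀ = C̃), and suppose the augmented matrix C̲ = [[C, C̃],[C̃*, C*]] is positive semidefinite. Then there exist a 2M×2M matrix V with real entries satisfying V Vᵀ = I (real orthogonal) and a diagonal matrix Λ with nonnegative real diagonal entries such that C̲ = (T V) Λ (T V)^H. -/
/-!
Complex conjugation of `T` and of the augmented matrix amounts to swapping the two blocks:
`T* = J T` and `C̲* = J C̲ J`, where `J` is the permutation matrix exchanging the two halves.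
Hence `S = Tᴴ C̲ T` satisfies `S* = Tᴴ J (J C̲ J) J T = S`, so it is a real symmetric matrix, and
the real spectral theorem gives `S = V Λ Vᵀ` with `V` real orthogonal. As `T` is unitary
(`Tmat_mul_conjTranspose`), `C̲ = T S Tᴴ = (T V) Λ (T V)ᴴ`. Finally `Λ = (T V)ᴴ C̲ (T V)` is
positive semidefinite because `C̲` is.
-/

open Matrix
open scoped ComplexOrder

/-- The 2M×2M matrix T = (1/√2)·[[I, i·I],[I, −i·I]]. -/
noncomputable def Tmat (M : ℕ) : Matrix (Fin M ⊕ Fin M) (Fin M ⊕ Fin M) ℂ :=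
  ((Real.sqrt 2 : ℂ)⁻¹) • Matrix.fromBlocks 1 (Complex.I • 1) 1 (-Complex.I • 1)

theorem Tmat_mul_conjTranspose (M : ℕ) : Tmat M * (Tmat M)ᴴ = 1 := by
  have h : ((Real.sqrt 2 : ℂ)⁻¹) * ((Real.sqrt 2 : ℂ)⁻¹) = 2⁻¹ := by
    rw [← mul_inv, ← Complex.ofReal_mul, Real.mul_self_sqrt (by norm_num)]
    norm_num
  have h2 : (1 : Matrix (Fin M) (Fin M) ℂ) + 1 = (2 : ℂ) • 1 := by
    rw [two_smul]
  simp [Tmat, fromBlocks_conjTranspose, fromBlocks_multiply, smul_smul, h, h2]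
  simp [fromBlocks_smul, smul_smul]

/-- The block swap `J`. -/
noncomputable def blockSwap (M : ℕ) : Matrix (Fin M ⊕ Fin M) (Fin M ⊕ Fin M) ℂ :=
  fromBlocks 0 1 1 0

theorem blockSwap_mul_self (M : ℕ) : blockSwap M * blockSwap M = 1 := by
  simp [blockSwap, fromBlocks_multiply]

theorem map_conj_Tmat (M : ℕ) : (Tmat M).map (starRingEnd ℂ) = blockSwap M * Tmat M := by
  simp only [blockSwap, Tmat, Matrix.mul_smul, fromBlocks_multiply]
  ext (i | i) (j | j) <;> by_cases hij : i = j <;> simp [hij]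

theorem map_conj_conjTranspose_Tmat (M : ℕ) :
    (Tmat M)ᴴ.map (starRingEnd ℂ) = (Tmat M)ᴴ * blockSwap M := by
  have h : (blockSwap M)ᴴ = blockSwap M := by
    simp [blockSwap, fromBlocks_conjTranspose]
  have h' : (Tmat M)ᴴ.map (starRingEnd ℂ) = ((Tmat M).map (starRingEnd ℂ))ᴴ := rfl
  rw [h', map_conj_Tmat, conjTranspose_mul, h]

theorem map_conj_augmented {M : ℕ} (C Ct : Matrix (Fin M) (Fin M) ℂ) :
    (fromBlocks C Ct (Ct.map (starRingEnd ℂ)) (C.map (starRingEnd ℂ))).map (starRingEnd ℂ) =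
      blockSwap M * fromBlocks C Ct (Ct.map (starRingEnd ℂ)) (C.map (starRingEnd ℂ)) *
        blockSwap M := by
  simp only [blockSwap, fromBlocks_multiply]
  ext (i | i) (j | j) <;> simp

/-- The spectral theorem for a real symmetric matrix that is presented as a complex Hermitian
matrix invariant under entrywise conjugation. -/
theorem exists_real_evd {n : Type*} [Fintype n] [DecidableEq n] (S : Matrix n n ℂ)
    (hS : S.IsHermitian) (hreal : S.map (starRingEnd ℂ) = S) :
    ∃ (V : Matrix n n ℝ) (d : n → ℝ), V * Vᵀ = 1 ∧
      S = V.map (fun r : ℝ => (r : ℂ)) * diagonal (fun i => (d i : ℂ)) *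
        (V.map (fun r : ℝ => (r : ℂ)))ᴴ := by
  have hSR : S = (S.map Complex.re).map (fun r : ℝ => (r : ℂ)) := by
    ext i j
    exact (Complex.conj_eq_iff_re.mp (congrFun (congrFun hreal i) j)).symm
  have hR : (S.map Complex.re).IsHermitian := by
    ext i j
    have h := congrArg Complex.re (hS.apply i j)
    simpa using h
  have hspec := hR.spectral_theorem
  rw [Unitary.conjStarAlgAut_apply] at hspec
  refine ⟨hR.eigenvectorUnitary, hR.eigenvalues, ?_, ?_⟩
  · have h := Unitary.coe_mul_star_self hR.eigenvectorUnitary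
    rwa [Unitary.coe_star, star_eq_conjTranspose, conjTranspose_eq_transpose_of_trivial] at h
  · generalize (hR.eigenvectorUnitary : Matrix n n ℝ) = V at hspec ⊢
    have h := congrArg (fun A : Matrix n n ℝ => A.map Complex.ofRealHom) hspec
    simp only [Matrix.map_mul] at h
    refine hSR.trans (h.trans ?_)
    congr 1
    · congr 1
      ext i j
      by_cases hij : i = j <;> simp [hij]
    · ext i j
      simp

/-- if the augmented matrix C̲ = [[C, C̃],[C̃*, C*]] is positive semidefinite,
then C̲ = (T V) Λ (T V)ᴴ with V real orthogonal and Λ diagonal with nonnegative entries. -/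
theorem augmented_matrix_real_evd {M : ℕ} (C Ct : Matrix (Fin M) (Fin M) ℂ)
    (hC : C.IsHermitian) (hCt : Ctᵀ = Ct)
    (hpsd : (Matrix.fromBlocks C Ct (Ct.map (starRingEnd ℂ)) (C.map (starRingEnd ℂ))).PosSemidef) :
    ∃ (V : Matrix (Fin M ⊕ Fin M) (Fin M ⊕ Fin M) ℝ) (Λ : (Fin M ⊕ Fin M) → ℝ),
      V * Vᵀ = 1 ∧ (∀ i, 0 ≤ Λ i) ∧
      Matrix.fromBlocks C Ct (Ct.map (starRingEnd ℂ)) (C.map (starRingEnd ℂ))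
        = (Tmat M * V.map (fun r : ℝ => (r : ℂ))) * Matrix.diagonal (fun i => (Λ i : ℂ))
            * (Tmat M * V.map (fun r : ℝ => (r : ℂ)))ᴴ := by
  have hconj := map_conj_augmented C Ct
  generalize fromBlocks C Ct (Ct.map (starRingEnd ℂ)) (C.map (starRingEnd ℂ)) = A at *
  have hTT := Tmat_mul_conjTranspose M
  have hreal : ((Tmat M)ᴴ * A * Tmat M).map (starRingEnd ℂ) = (Tmat M)ᴴ * A * Tmat M := by
    rw [Matrix.map_mul, Matrix.map_mul, map_conj_conjTranspose_Tmat, map_conj_Tmat, hconj]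
    calc _ = (Tmat M)ᴴ * (blockSwap M * blockSwap M) * A * (blockSwap M * blockSwap M) * Tmat M := by
          simp only [Matrix.mul_assoc]
      _ = _ := by simp [blockSwap_mul_self]
  obtain ⟨V, d, hV, hS⟩ := exists_real_evd _
    (hpsd.conjTranspose_mul_mul_same (Tmat M)).isHermitian hreal
  have hA : A = (Tmat M * V.map (fun r : ℝ => (r : ℂ))) * diagonal (fun i => (d i : ℂ))
      * (Tmat M * V.map (fun r : ℝ => (r : ℂ)))ᴴ := by
    calc A = (Tmat M * (Tmat M)ᴴ) * A * (Tmat M * (Tmat M)ᴴ) := by simp [hTT]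
      _ = Tmat M * ((Tmat M)ᴴ * A * Tmat M) * (Tmat M)ᴴ := by simp only [Matrix.mul_assoc]
      _ = _ := by rw [hS, conjTranspose_mul]; simp only [Matrix.mul_assoc]
  have hVc : V.map (fun r : ℝ => (r : ℂ)) * (V.map (fun r : ℝ => (r : ℂ)))ᴴ = 1 := by
    have h := congrArg (fun B : Matrix _ _ ℝ => B.map Complex.ofRealHom) hV
    simp only [Matrix.map_mul] at h
    rw [Matrix.map_one _ (map_zero _) (map_one _)] at h
    rw [← h]
    congr 1
    ext i j
    simp
  have hU : (Tmat M * V.map (fun r : ℝ => (r : ℂ)))ᴴ * (Tmat M * V.map (fun r : ℝ => (r : ℂ)))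
      = 1 := by
    rw [mul_eq_one_comm, conjTranspose_mul]
    calc _ = Tmat M * (V.map (fun r : ℝ => (r : ℂ)) * (V.map (fun r : ℝ => (r : ℂ)))ᴴ) *
          (Tmat M)ᴴ := by simp only [Matrix.mul_assoc]
      _ = 1 := by rw [hVc, Matrix.mul_one, hTT]
  refine ⟨V, d, hV, fun i => ?_, hA⟩
  have hD := hpsd.conjTranspose_mul_mul_same (Tmat M * V.map (fun r : ℝ => (r : ℂ)))
  generalize Tmat M * V.map (fun r : ℝ => (r : ℂ)) = U at hA hU hD
  have hdiag : Uᴴ * A * U = diagonal (fun i => (d i : ℂ)) := by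
    calc _ = (Uᴴ * U) * diagonal (fun i => (d i : ℂ)) * (Uᴴ * U) := by
          rw [hA]; simp only [Matrix.mul_assoc]
      _ = _ := by rw [hU, Matrix.one_mul, Matrix.mul_one]
  rw [hdiag, posSemidef_diagonal_iff] at hD
  exact_mod_cast hD i
end

section
/- Let C ∈ M_M(ℂ) be Hermitian, C̃ ∈ M_M(ℂ) be symmetric (C̃ᵀ = C̃), and suppose the augmented matrix C̲ = [[C, C̃],[C̃*, C*]] is positive semidefinite. Then there exist matrices B1, B2 ∈ M_M(ℂ) such that C = B1 B1^H + B2 B2^H and C̃ = B1 B2ᵀ + B2 B1ᵀ. -/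
open Matrix
open scoped ComplexOrder

/-!
The augmented matrix is fixed by the involution `X ↦ J X* J`, where `J` swaps the two blocks.
This involution respects products and positive semidefiniteness, so it also fixes the (unique)
positive semidefinite square root `S`, which therefore has the form `[[B1, B2], [B2*, B1*]]`.
Reading off the top blocks of `S * Sᴴ = S * S` gives the two identities.
On Hermitian matrices `X* = Xᵀ`, so the involution is written below as
`X ↦ Xᵀ.submatrix Sum.swap Sum.swap`.
-/

open scoped MatrixOrder Matrix.Norms.L2Operator in
/-- Existence and uniqueness of the positive semidefinite square root. -/
lemma exists_unique_posSemidef_sqrt {n : Type*} [Fintype n] [DecidableEq n]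
    {A : Matrix n n ℂ} (hA : A.PosSemidef) :
    ∃ S : Matrix n n ℂ, S.PosSemidef ∧ S * S = A ∧
      ∀ T : Matrix n n ℂ, T.PosSemidef → T * T = A → T = S := by
  refine ⟨CFC.sqrt A, (CFC.sqrt_nonneg A).posSemidef,
    CFC.sqrt_mul_sqrt_self A hA.nonneg, fun T hT h => ?_⟩
  exact (CFC.sqrt_unique h hT.nonneg).symm

/-- if the augmented matrix C̲ = [[C, C̃],[C̃*, C*]] is positive semidefinite,
then there exist B1, B2 with C = B1 B1ᴴ + B2 B2ᴴ and C̃ = B1 B2ᵀ + B2 B1ᵀ. -/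
theorem augmented_matrix_widely_linear_factorization {M : ℕ}
    (C Ct : Matrix (Fin M) (Fin M) ℂ) (hC : C.IsHermitian) (hCt : Ctᵀ = Ct)
    (hpsd : (Matrix.fromBlocks C Ct (Ct.map (starRingEnd ℂ)) (C.map (starRingEnd ℂ))).PosSemidef) :
    ∃ B1 B2 : Matrix (Fin M) (Fin M) ℂ,
      C = B1 * B1ᴴ + B2 * B2ᴴ ∧ Ct = B1 * B2ᵀ + B2 * B1ᵀ := by
  obtain ⟨S, hS, hSS, huniq⟩ := exists_unique_posSemidef_sqrt hpsd
  have hswap : Sᵀ.submatrix Sum.swap Sum.swap = S := by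
    refine huniq _ (hS.transpose.submatrix _) ?_
    have hmul : Sᵀ.submatrix Sum.swap Sum.swap * Sᵀ.submatrix Sum.swap Sum.swap
        = (S * S)ᵀ.submatrix Sum.swap Sum.swap := by
      rw [transpose_mul]
      exact submatrix_mul_equiv Sᵀ Sᵀ Sum.swap (Equiv.sumComm (Fin M) (Fin M)) Sum.swap
    have hCtr : (C.map (starRingEnd ℂ))ᵀ = C := hC
    have hCtr' : Cᵀ = C.map (starRingEnd ℂ) := congrArg transpose hCtr.symm
    have hCtc : (Ct.map (starRingEnd ℂ))ᵀ = Ct.map (starRingEnd ℂ) := by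
      rw [← transpose_map, hCt]
    rw [hmul, hSS, fromBlocks_transpose, hCt, hCtr, hCtr', hCtc]
    exact fromBlocks_submatrix_sum_swap_sum_swap ..
  -- `hswap` gives `h22` and `h12`; the Hermitian symmetry of `S` gives `h21` and `h11`.
  have h22 : S.toBlocks₂₂ = S.toBlocks₁₁ᵀ := by
    ext i j
    exact (congrFun₂ hswap (Sum.inr i) (Sum.inr j)).symm
  have h12 : S.toBlocks₁₂ᵀ = S.toBlocks₁₂ := by
    ext i j
    exact congrFun₂ hswap (Sum.inl i) (Sum.inr j)
  have h21 : S.toBlocks₂₁ = S.toBlocks₁₂ᴴ := by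
    ext i j
    exact (hS.isHermitian.apply (Sum.inr i) (Sum.inl j)).symm
  have h11 : S.toBlocks₁₁ᴴ = S.toBlocks₁₁ := by
    ext i j
    exact hS.isHermitian.apply (Sum.inl i) (Sum.inl j)
  rw [← fromBlocks_toBlocks S, fromBlocks_multiply, fromBlocks_inj] at hSS
  obtain ⟨hC', hCt', -, -⟩ := hSS
  refine ⟨S.toBlocks₁₁, S.toBlocks₁₂, ?_, ?_⟩
  · rw [h11, ← h21, hC']
  · rw [h12, ← h22, hCt']
end

section
/- Let t, η, ω, d1, d2, d3, d4 be real numbers satisfying t·cos(η) + d1·t² + d2 = 0 and t·cos(η + ω) + d3·t² + d4 = 0. Then e1·t⁴ + e2·t² + e3 = 0, where e1 = d3² + d1² − 2·d1·d3·cos(ω), e2 = 2(d1·d2 + d3·d4) − 2(d1·d4 + d2·d3)·cos(ω) − sin²(ω), and e3 = d2² + d4² − 2·d2·d4·cos(ω). -/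
/-!
Both equations express quadratics in `t` as multiples of cosines: `A = d1 t² + d2 = -t cos η` and
`B = d3 t² + d4 = -t cos (η + ω)`. The phase `η` is eliminated by the identity
`cos_sq_add_cos_add_sq`, which multiplied by `t²` reads `A² + B² - 2 A B cos ω = t² sin² ω`;
collecting powers of `t` gives the claim.
-/

/-- The relation between two cosines whose phases differ by `ω`. Expanding `cos (η + ω)`
collapses the left side to `(cos η ^ 2 + sin η ^ 2) * sin ω ^ 2`. -/
lemma cos_sq_add_cos_add_sq (η ω : ℝ) :
    Real.cos η ^ 2 + Real.cos (η + ω) ^ 2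
      - 2 * Real.cos η * Real.cos (η + ω) * Real.cos ω = Real.sin ω ^ 2 := by
  rw [Real.cos_add]
  linear_combination Real.sin ω ^ 2 * Real.sin_sq_add_cos_sq η
    - Real.cos η ^ 2 * Real.sin_sq_add_cos_sq ω

/-- the two trigonometric-quadratic boundary equations imply a
quadratic equation in t². -/
theorem theta_system_quartic (t η ω d1 d2 d3 d4 : ℝ)
    (h1 : t * Real.cos η + d1 * t ^ 2 + d2 = 0)
    (h2 : t * Real.cos (η + ω) + d3 * t ^ 2 + d4 = 0) :
    (d3 ^ 2 + d1 ^ 2 - 2 * d1 * d3 * Real.cos ω) * t ^ 4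
      + (2 * (d1 * d2 + d3 * d4) - 2 * (d1 * d4 + d2 * d3) * Real.cos ω
          - Real.sin ω ^ 2) * t ^ 2
      + (d2 ^ 2 + d4 ^ 2 - 2 * d2 * d4 * Real.cos ω) = 0 := by
  have hA : d1 * t ^ 2 + d2 = -(t * Real.cos η) := by linear_combination h1
  have hB : d3 * t ^ 2 + d4 = -(t * Real.cos (η + ω)) := by linear_combination h2
  -- With `A = d1 * t ^ 2 + d2` and `B = d3 * t ^ 2 + d4`, the left side is
  -- `A ^ 2 + B ^ 2 - 2 * A * B * cos ω - t ^ 2 * sin ω ^ 2`.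
  calc
    _ = (d1 * t ^ 2 + d2) ^ 2 + (d3 * t ^ 2 + d4) ^ 2
          - 2 * (d1 * t ^ 2 + d2) * (d3 * t ^ 2 + d4) * Real.cos ω
          - t ^ 2 * Real.sin ω ^ 2 := by ring
    _ = 0 := by
      rw [hA, hB]
      linear_combination t ^ 2 * cos_sq_add_cos_add_sq η ω
end
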